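/- arXiv:2001.07505 — 4 statements merged into one kernel-verified Lean document; each statement's English description precedes it below -/
import Mathlib

section
/- Let ε ∈ (0,1), δ ∈ (1,∞) and let φ : ℝ → ℝ be a twice continuously differentiable function such that |φ'(x)| ≤ 1 and x·φ'(x) ≥ 0 for all x ∈ ℝ, and 0 ≤ φ''(x) ≤ (2/(|x| log δ))·1_{[ε/δ, ε]}(|x|) for all x ≠ 0. Then for every x ∈ ℝ, every y ∈ ℝ \ {0} with x·y ≥ 0 and every z > 0, one has φ(y + x z) − φ(y) − x z φ'(y) ≤ (2 x² z² / log δ) · min(1/|y|, δ/ε) · 1_{(0,ε]}(|y|). -/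
/-!
Put `h = x z`. Two applications of the mean value theorem along the segment from `y` to `y + h`
give `φ (y + h) - φ y - h φ' y = s h² φ'' (y + r h)` with `r, s ∈ (0, 1)`. Since `x y ≥ 0`, the
segment leads away from the origin, so `|y| ≤ |y + r h|`; as `1 / |·|` decreases and
`φ''` lives on `ε / δ ≤ |·| ≤ ε`, the bound on `φ''` at `y + r h` passes to `y`. The claimed constant
is twice what Taylor's formula with integral remainder yields, which is why `s ≤ 1` suffices.
-/

/-- Taylor's formula of order two with the crude remainder `s h² f'' (y + r h)`. -/
lemma exists_taylor_two {f : ℝ → ℝ} (hf : ContDiff ℝ 2 f) (y h : ℝ) :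
    ∃ r s : ℝ, 0 < r ∧ 0 < s ∧ s < 1 ∧
      f (y + h) - f y - h * deriv f y = s * h ^ 2 * deriv (deriv f) (y + r * h) := by
  have hd1 : Differentiable ℝ f := hf.differentiable (by norm_num)
  have hd2 : Differentiable ℝ (deriv f) := hf.differentiable_deriv_two
  have hline : ∀ t : ℝ, HasDerivAt (fun t : ℝ => y + t * h) h t := fun t => by
    simpa using ((hasDerivAt_id t).mul_const h).const_add y
  have hG : ∀ t : ℝ, HasDerivAt (fun t : ℝ => f (y + t * h)) (deriv f (y + t * h) * h) t :=
    fun t => (hd1 (y + t * h)).hasDerivAt.comp t (hline t)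
  have hK : ∀ t : ℝ, HasDerivAt (fun t : ℝ => deriv f (y + t * h))
      (deriv (deriv f) (y + t * h) * h) t :=
    fun t => HasDerivAt.comp (h₂ := deriv f) t (hd2 (y + t * h)).hasDerivAt (hline t)
  obtain ⟨s, ⟨hs0, hs1⟩, hs⟩ := exists_hasDerivAt_eq_slope _ _ (zero_lt_one' ℝ)
    (fun t _ => (hG t).continuousAt.continuousWithinAt) (fun t _ => hG t)
  obtain ⟨r, ⟨hr0, -⟩, hr⟩ := exists_hasDerivAt_eq_slope _ _ hs0
    (fun t _ => (hK t).continuousAt.continuousWithinAt) (fun t _ => hK t)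
  refine ⟨r, s, hr0, hs0, hs1, ?_⟩
  rw [eq_div_iff (by linarith)] at hr
  simp only [one_mul, zero_mul, add_zero, sub_zero, div_one] at hs hr
  linear_combination -hs - h * hr

/-- Second-order Taylor estimate for the Yamada–Watanabe function (first bound of
Lemma 4.2, inequality (4.4) of the paper). -/
theorem stmt_2 (δ ε : ℝ) (hδ : δ ∈ Set.Ioi (1:ℝ)) (hε : ε ∈ Set.Ioo (0:ℝ) 1)
    (φ : ℝ → ℝ) (hφC2 : ContDiff ℝ 2 φ)
    (hφ' : ∀ x : ℝ, |deriv φ x| ≤ 1)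
    (hφ'sign : ∀ x : ℝ, 0 ≤ x * deriv φ x)
    (hφ'' : ∀ x : ℝ, x ≠ 0 → 0 ≤ deriv (deriv φ) x ∧
      deriv (deriv φ) x ≤
        (2 / (|x| * Real.log δ)) * Set.indicator (Set.Icc (ε / δ) ε) 1 |x|) :
    ∀ x y z : ℝ, y ≠ 0 → 0 ≤ x * y → 0 < z →
      φ (y + x * z) - φ y - x * z * deriv φ y ≤
        (2 * x ^ 2 * z ^ 2 / Real.log δ) * min (1 / |y|) (δ / ε) *
          Set.indicator (Set.Ioc (0:ℝ) ε) 1 |y| := by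
  intro x y z hy hxy hz
  have hδ1 : 1 < δ := hδ
  have hL : 0 < Real.log δ := Real.log_pos hδ1
  have hy0 : 0 < |y| := abs_pos.mpr hy
  have hεδ : 0 < ε / δ := div_pos hε.1 (by linarith)
  obtain ⟨r, s, hr0, hs0, hs1, hT⟩ := exists_taylor_two hφC2 y (x * z)
  have hyw : |y| ≤ |y + r * (x * z)| := by
    rw [← sq_le_sq]
    nlinarith [mul_nonneg (mul_nonneg hr0.le hz.le) hxy, sq_nonneg (r * (x * z))]
  obtain ⟨h0, h1⟩ := hφ'' _ (abs_pos.mp (hy0.trans_le hyw))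
  rw [hT]
  set w := y + r * (x * z)
  have hw0 : 0 < |w| := hy0.trans_le hyw
  have hC : deriv (deriv φ) w ≤
      2 / Real.log δ * min (1 / |y|) (δ / ε) * Set.indicator (Set.Ioc (0:ℝ) ε) 1 |y| := by
    refine h1.trans ?_
    by_cases hw : |w| ∈ Set.Icc (ε / δ) ε
    · have hyε : |y| ∈ Set.Ioc 0 ε := ⟨hy0, hyw.trans hw.2⟩
      rw [Set.indicator_of_mem hw, Set.indicator_of_mem hyε, Pi.one_apply, Pi.one_apply, mul_one,
        mul_one]
      have hmin : 1 / |w| ≤ min (1 / |y|) (δ / ε) := by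
        refine le_min (one_div_le_one_div_of_le hy0 hyw) ?_
        rw [← one_div_div ε δ]
        exact one_div_le_one_div_of_le hεδ hw.1
      calc 2 / (|w| * Real.log δ) = 2 / Real.log δ * (1 / |w|) := by
            field_simp
        _ ≤ _ := by gcongr
    · rw [Set.indicator_of_notMem hw, mul_zero]
      have := hε.1
      exact mul_nonneg (by positivity) (Set.indicator_nonneg (fun _ _ => zero_le_one) _)
  calc s * (x * z) ^ 2 * deriv (deriv φ) w ≤ 1 * (x * z) ^ 2 * deriv (deriv φ) w := by gcongr
    _ ≤ 1 * (x * z) ^ 2 * (2 / Real.log δ * min (1 / |y|) (δ / ε) *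
          Set.indicator (Set.Ioc (0:ℝ) ε) 1 |y|) := by gcongr
    _ = _ := by ring
end

section
/- Let ε ∈ (0,1), δ ∈ (1,∞) and let φ : ℝ → ℝ be a twice continuously differentiable function such that |φ'(x)| ≤ 1 and x·φ'(x) ≥ 0 for all x ∈ ℝ, and 0 ≤ φ''(x) ≤ (2/(|x| log δ))·1_{[ε/δ, ε]}(|x|) for all x ≠ 0. Then for every x ∈ ℝ, every y ∈ ℝ \ {0} with x·y ≥ 0 and every z > 0, one has φ(y + x z) − φ(y) − x z φ'(y) ≤ 1_{(0,ε]}(|y|) · |x| z. -/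
/-!
Put `h = x * z`, which has the same sign as `y`. By the mean value theorem the left-hand side is
`h * (φ' c - φ' y)` for some `c` between `y` and `y + h`. If `|y| ≤ ε`, then `h * φ' c ≤ |h|`, while
`h * φ' y ≥ 0` because `φ' y` has the sign of `y`. If `|y| > ε`, moving from `y` to `c` goes away
from the origin, so `φ''` vanishes along the way and `φ' c = φ' y`.
-/

open MeasureTheory

/-- Mean value theorem with unordered (possibly equal) endpoints. -/
lemma exists_mem_uIcc_sub_eq_mul_deriv {f : ℝ → ℝ} (hf : Differentiable ℝ f) (a b : ℝ) :
    ∃ c ∈ Set.uIcc a b, f b - f a = (b - a) * deriv f c := by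
  rcases lt_trichotomy a b with h | h | h
  · obtain ⟨c, hc, e⟩ := exists_deriv_eq_slope f h hf.continuous.continuousOn hf.differentiableOn
    refine ⟨c, Set.mem_uIcc.2 (Or.inl ⟨hc.1.le, hc.2.le⟩), ?_⟩
    rw [e, mul_div_cancel₀ _ (sub_pos.2 h).ne']
  · subst h
    exact ⟨a, Set.left_mem_uIcc, by ring⟩
  · obtain ⟨c, hc, e⟩ := exists_deriv_eq_slope f h hf.continuous.continuousOn hf.differentiableOn
    refine ⟨c, Set.mem_uIcc.2 (Or.inr ⟨hc.1.le, hc.2.le⟩), ?_⟩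
    have : (a - b) * deriv f c = f a - f b := by
      rw [e, mul_div_cancel₀ _ (sub_pos.2 h).ne']
    linarith

/-- Moving from `y` in the direction of its own sign does not decrease the absolute value. -/
lemma abs_le_abs_of_mem_uIcc_add {y h w : ℝ} (hy : y ≠ 0) (hh : 0 ≤ h * y)
    (hw : w ∈ Set.uIcc y (y + h)) : |y| ≤ |w| := by
  rw [Set.mem_uIcc] at hw
  rcases lt_or_gt_of_ne hy with hy | hy
  · have h0 : h ≤ 0 := by
      by_contra! h0
      nlinarith
    have : w ≤ y := by rcases hw with hw | hw <;> linarith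
    rw [abs_of_neg hy, abs_of_neg (by linarith)]
    linarith
  · have h0 : 0 ≤ h := nonneg_of_mul_nonneg_left hh hy
    have : y ≤ w := by rcases hw with hw | hw <;> linarith
    rw [abs_of_pos hy, abs_of_pos (by linarith)]
    linarith

/-- First-order estimate for the Yamada–Watanabe function (inequality (4.5) of the paper). -/
theorem stmt_3 (δ ε : ℝ) (hδ : δ ∈ Set.Ioi (1:ℝ)) (hε : ε ∈ Set.Ioo (0:ℝ) 1)
    (φ : ℝ → ℝ) (hφC2 : ContDiff ℝ 2 φ)
    (hφ' : ∀ x : ℝ, |deriv φ x| ≤ 1)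
    (hφ'sign : ∀ x : ℝ, 0 ≤ x * deriv φ x)
    (hφ'' : ∀ x : ℝ, x ≠ 0 → 0 ≤ deriv (deriv φ) x ∧
      deriv (deriv φ) x ≤
        (2 / (|x| * Real.log δ)) * Set.indicator (Set.Icc (ε / δ) ε) 1 |x|) :
    ∀ x y z : ℝ, y ≠ 0 → 0 ≤ x * y → 0 < z →
      φ (y + x * z) - φ y - x * z * deriv φ y ≤
        Set.indicator (Set.Ioc (0:ℝ) ε) 1 |y| * (|x| * z) := by
  intro x y z hy hxy hz
  have hd : Differentiable ℝ φ := hφC2.differentiable (by norm_num)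
  have hdd : Differentiable ℝ (deriv φ) :=
    (ContDiff.deriv' (n := 1) (by simpa [one_add_one_eq_two] using hφC2)).differentiable (by norm_num)
  have hhy : 0 ≤ x * z * y := by nlinarith [mul_nonneg hxy hz.le]
  have habs : |x| * z = |x * z| := by rw [abs_mul, abs_of_pos hz]
  rw [habs]
  generalize x * z = h at hhy
  obtain ⟨c, hc, e⟩ := exists_mem_uIcc_sub_eq_mul_deriv hd y (y + h)
  rw [e, add_sub_cancel_left]
  by_cases hyε : |y| ≤ ε
  · rw [Set.indicator_of_mem (show |y| ∈ Set.Ioc 0 ε from ⟨abs_pos.2 hy, hyε⟩)]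
    have h1 : h * deriv φ c ≤ |h| := by
      calc h * deriv φ c ≤ |h| * |deriv φ c| := (le_abs_self _).trans (abs_mul _ _).le
        _ ≤ |h| := mul_le_of_le_one_right (abs_nonneg _) (hφ' c)
    have h2 : 0 ≤ h * deriv φ y := by
      -- `(h * φ' y) * y ^ 2` is the product of the nonnegative numbers `h * y` and `y * φ' y`.
      have hp : 0 < y ^ 2 := by positivity
      refine nonneg_of_mul_nonneg_left ?_ hp
      nlinarith [mul_nonneg hhy (hφ'sign y)]
    simp only [Pi.one_apply, one_mul]
    linarith
  · rw [Set.indicator_of_notMem (fun hm => hyε hm.2)]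
    obtain ⟨w, hw, e'⟩ := exists_mem_uIcc_sub_eq_mul_deriv hdd y c
    have hw' : ε < |w| := (not_le.1 hyε).trans_le
      (abs_le_abs_of_mem_uIcc_add hy hhy (Set.uIcc_subset_uIcc Set.left_mem_uIcc hc hw))
    have hw0 : w ≠ 0 := abs_pos.1 (hε.1.trans hw')
    have h0 := hφ'' w hw0
    rw [Set.indicator_of_notMem (fun hm => hw'.not_ge hm.2), mul_zero] at h0
    have hz0 : deriv (deriv φ) w = 0 := le_antisymm h0.2 h0.1
    rw [hz0, mul_zero] at e'
    rw [sub_eq_zero.1 e']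
    simp
end

section
/- Let ν be a σ-finite Borel measure on ℝ concentrated on (0,∞) such that ∫_{(0,∞)} min(z, z²) ν(dz) < ∞. Let ε ∈ (0,1), δ ∈ (1,∞) and let φ : ℝ → ℝ be a twice continuously differentiable function such that |φ'(x)| ≤ 1 and x·φ'(x) ≥ 0 for all x ∈ ℝ, and 0 ≤ φ''(x) ≤ (2/(|x| log δ))·1_{[ε/δ, ε]}(|x|) for all x ≠ 0. Then for every x ∈ ℝ, every y ∈ ℝ \ {0} with x·y ≥ 0 and every u > 0, one has ∫_{(0,∞)} { φ(y + x z) − φ(y) − x z φ'(y) } ν(dz) ≤ 2 · 1_{(0,ε]}(|y|) · [ (x²/log δ) · min(1/|y|, δ/ε) · ∫_{(0,u]} z² ν(dz) + |x| · ∫_{(u,∞)} z ν(dz) ]. -/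
/-!
The integrand is the second order Taylor remainder of `φ` at `y` with increment `h = x z`. Applying
the mean value theorem first to `φ` and then to `φ'` writes it as `h * k * φ''(η)` with
`0 ≤ h * k ≤ h ^ 2` and, as `h` and `y` have the same sign, `|y| ≤ |η|`. The bound on `φ''` therefore
makes it vanish when `|y| > ε`, and gives at most
`(2 / log δ) * min (1 / |y|) (δ / ε) * h ^ 2` in general. The first mean value step and `|φ'| ≤ 1`
also bound it by `2 * |h|`. Use the quadratic bound for `z ≤ u`, the linear one for `z > u`, and
integrate; the two majorants are integrable because `min z (z ^ 2)` is.
-/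

open MeasureTheory

/-- Lagrange's mean value theorem with an increment `h` of either sign. -/
theorem mvt_incr (f : ℝ → ℝ) (hf : Differentiable ℝ f) (y h : ℝ) :
    ∃ t ∈ Set.Ioo (0:ℝ) 1, f (y + h) - f y = h * deriv f (y + t * h) := by
  have hd : ∀ t : ℝ, HasDerivAt (fun t : ℝ => f (y + t * h)) (deriv f (y + t * h) * h) t := by
    intro t
    have h1 : HasDerivAt (fun t : ℝ => y + t * h) h t := by
      simpa using ((hasDerivAt_id t).mul_const h).const_add y
    exact (hf (y + t * h)).hasDerivAt.comp t h1
  obtain ⟨t, ht, he⟩ := exists_hasDerivAt_eq_slope (fun t : ℝ => f (y + t * h))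
    (fun t => deriv f (y + t * h) * h) one_pos
    (fun t _ => (hd t).continuousAt.continuousWithinAt) (fun t _ => hd t)
  refine ⟨t, ht, ?_⟩
  simp at he
  linarith

/-- Second order Taylor remainder; the sign condition on `h` keeps the intermediate point `η` at
least as far from the origin as `y`. -/
theorem taylor_rem (φ : ℝ → ℝ) (hφC2 : ContDiff ℝ 2 φ) (y h : ℝ) (hy : 0 ≤ h * y) :
    ∃ c η : ℝ, 0 ≤ c ∧ c ≤ h ^ 2 ∧ |y| ≤ |η| ∧
      φ (y + h) - φ y - h * deriv φ y = c * deriv (deriv φ) η := by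
  have hd1 : Differentiable ℝ φ := hφC2.differentiable (by norm_num)
  have hd2 : Differentiable ℝ (deriv φ) := by
    have h2 : ContDiff ℝ (1 + 1) φ := by
      convert hφC2 using 1
      norm_num
    exact (contDiff_succ_iff_deriv.1 h2).2.2.differentiable (by norm_num)
  obtain ⟨s, ⟨hs0, hs1⟩, hs⟩ := mvt_incr φ hd1 y h
  obtain ⟨t, ⟨ht0, ht1⟩, ht⟩ := mvt_incr (deriv φ) hd2 y (s * h)
  refine ⟨s * h ^ 2, y + t * (s * h), by positivity, ?_, ?_, ?_⟩
  · nlinarith [sq_nonneg h]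
  · apply sq_le_sq.1
    have h3 : 0 ≤ t * s * (h * y) := by positivity
    nlinarith [sq_nonneg (t * (s * h))]
  · linear_combination hs + h * ht

/-- Lemma 4.1 of the paper: integrated Yamada–Watanabe estimate against a Lévy
measure `ν` concentrated on `(0,∞)` with `∫ min(z, z²) ν(dz) < ∞`. -/
theorem stmt_4 (ν : Measure ℝ) [SigmaFinite ν]
    (hν0 : ν ((Set.Ioi (0:ℝ))ᶜ) = 0)
    (hνint : IntegrableOn (fun z : ℝ => min z (z ^ 2)) (Set.Ioi 0) ν)
    (δ ε : ℝ) (hδ : δ ∈ Set.Ioi (1:ℝ)) (hε : ε ∈ Set.Ioo (0:ℝ) 1)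
    (φ : ℝ → ℝ) (hφC2 : ContDiff ℝ 2 φ)
    (hφ' : ∀ x : ℝ, |deriv φ x| ≤ 1)
    (hφ'sign : ∀ x : ℝ, 0 ≤ x * deriv φ x)
    (hφ'' : ∀ x : ℝ, x ≠ 0 → 0 ≤ deriv (deriv φ) x ∧
      deriv (deriv φ) x ≤
        (2 / (|x| * Real.log δ)) * Set.indicator (Set.Icc (ε / δ) ε) 1 |x|) :
    ∀ x y u : ℝ, y ≠ 0 → 0 ≤ x * y → 0 < u →
      (∫ z in Set.Ioi (0:ℝ), (φ (y + x * z) - φ y - x * z * deriv φ y) ∂ν) ≤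
        2 * Set.indicator (Set.Ioc (0:ℝ) ε) 1 |y| *
          ((x ^ 2 / Real.log δ) * min (1 / |y|) (δ / ε) *
              (∫ z in Set.Ioc (0:ℝ) u, z ^ 2 ∂ν)
            + |x| * (∫ z in Set.Ioi u, z ∂ν)) := by
  intro x y u hy hxy hu
  obtain ⟨hε0, hε1⟩ := hε
  have hδ1 : 1 < δ := hδ
  have hδ0 : 0 < δ := by linarith
  have hL : 0 < Real.log δ := Real.log_pos hδ1
  have hy0 : 0 < |y| := abs_pos.2 hy
  set m : ℝ := min (1 / |y|) (δ / ε) with hm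
  have hm0 : 0 ≤ m := by positivity
  have hsgn : ∀ z : ℝ, 0 < z → 0 ≤ x * z * y := fun z hz => by
    have := mul_nonneg hxy hz.le
    linarith
  by_cases hyε : |y| ≤ ε
  swap
  · have hzero : (∫ z in Set.Ioi (0:ℝ), (φ (y + x * z) - φ y - x * z * deriv φ y) ∂ν) = 0 := by
      refine setIntegral_eq_zero_of_forall_eq_zero fun z hz => ?_
      obtain ⟨c, η, -, -, hη, he⟩ := taylor_rem φ hφC2 y (x * z) (hsgn z hz)
      have hη0 : η ≠ 0 := abs_pos.1 (hy0.trans_le hη)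
      obtain ⟨h1, h2⟩ := hφ'' η hη0
      rw [Set.indicator_of_notMem (fun hmem => hyε (hη.trans hmem.2)), mul_zero] at h2
      rw [he, le_antisymm h2 h1, mul_zero]
    rw [hzero, Set.indicator_of_notMem (fun hmem => hyε hmem.2)]
    simp
  rw [Set.indicator_of_mem (show |y| ∈ Set.Ioc 0 ε from ⟨hy0, hyε⟩)]
  have hC : ∀ η : ℝ, |y| ≤ |η| → deriv (deriv φ) η ≤ 2 / Real.log δ * m := by
    intro η hη
    have hη0 : 0 < |η| := hy0.trans_le hη
    refine (hφ'' η (abs_pos.1 hη0)).2.trans ?_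
    by_cases hmem : |η| ∈ Set.Icc (ε / δ) ε
    · rw [Set.indicator_of_mem hmem]
      have h1 : 1 / |η| ≤ m := by
        refine le_min (one_div_le_one_div_of_le hy0 hη) ?_
        rw [← one_div_div ε δ]
        exact one_div_le_one_div_of_le (by positivity) hmem.1
      calc 2 / (|η| * Real.log δ) * (1 : ℝ → ℝ) |η| = 2 / Real.log δ * (1 / |η|) := by
            simp only [Pi.one_apply]
            field_simp
        _ ≤ _ := by gcongr
    · rw [Set.indicator_of_notMem hmem, mul_zero]
      positivity
  have hquad : ∀ z : ℝ, 0 < z → φ (y + x * z) - φ y - x * z * deriv φ y ≤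
      2 * (x ^ 2 / Real.log δ * m) * z ^ 2 := by
    intro z hz
    obtain ⟨c, η, hc0, hc, hη, he⟩ := taylor_rem φ hφC2 y (x * z) (hsgn z hz)
    rw [he]
    calc c * deriv (deriv φ) η ≤ c * (2 / Real.log δ * m) := by
          gcongr
          exact hC η hη
      _ ≤ (x * z) ^ 2 * (2 / Real.log δ * m) := by gcongr
      _ = _ := by ring
  have hnonneg : ∀ z : ℝ, 0 < z → 0 ≤ φ (y + x * z) - φ y - x * z * deriv φ y := by
    intro z hz
    obtain ⟨c, η, hc0, -, hη, he⟩ := taylor_rem φ hφC2 y (x * z) (hsgn z hz)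
    rw [he]
    exact mul_nonneg hc0 (hφ'' η (abs_pos.1 (hy0.trans_le hη))).1
  have hlin : ∀ z : ℝ, 0 < z → φ (y + x * z) - φ y - x * z * deriv φ y ≤ 2 * |x| * z := by
    intro z hz
    obtain ⟨t, -, he⟩ := mvt_incr φ (hφC2.differentiable (by norm_num)) y (x * z)
    rw [he, ← mul_sub]
    calc _ ≤ |x * z * (deriv φ (y + t * (x * z)) - deriv φ y)| := le_abs_self _
      _ = |x| * z * |deriv φ (y + t * (x * z)) - deriv φ y| := by
          rw [abs_mul, abs_mul, abs_of_pos hz]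
      _ ≤ |x| * z * 2 := by
          gcongr
          refine (abs_sub _ _).trans ?_
          linarith [hφ' (y + t * (x * z)), hφ' y]
      _ = _ := by ring
  have hint1 : IntegrableOn (fun z : ℝ => z ^ 2) (Set.Ioc 0 u) ν := by
    refine Integrable.mono' ((hνint.mono_set Set.Ioc_subset_Ioi_self).const_mul (max 1 u))
      (by fun_prop) ?_
    refine (ae_restrict_iff' measurableSet_Ioc).2 (Filter.Eventually.of_forall fun z hz => ?_)
    rw [Real.norm_of_nonneg (sq_nonneg z), mul_min_of_nonneg _ _ (by positivity)]
    refine le_min ?_ ?_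
    · nlinarith [le_max_right 1 u, hz.1, hz.2]
    · nlinarith [le_max_left 1 u, sq_nonneg z]
  have hint2 : IntegrableOn (fun z : ℝ => z) (Set.Ioi u) ν := by
    refine Integrable.mono' ((hνint.mono_set (Set.Ioi_subset_Ioi hu.le)).const_mul (max 1 (1 / u)))
      (by fun_prop) ?_
    refine (ae_restrict_iff' measurableSet_Ioi).2 (Filter.Eventually.of_forall fun z hz => ?_)
    have hz : u < z := hz
    have hz0 : 0 < z := hu.trans hz
    rw [Real.norm_of_nonneg hz0.le, mul_min_of_nonneg _ _ (by positivity)]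
    refine le_min ?_ ?_
    · nlinarith [le_max_left 1 (1 / u)]
    · have h1 : 1 ≤ 1 / u * z := by
        rw [one_div, inv_mul_eq_div]
        exact (one_le_div hu).2 hz.le
      have h2 : 1 ≤ max 1 (1 / u) * z := h1.trans (by gcongr; exact le_max_right _ _)
      nlinarith
  have hg1 : Integrable ((Set.Ioc 0 u).indicator
      fun z : ℝ => 2 * (x ^ 2 / Real.log δ * m) * z ^ 2) (ν.restrict (Set.Ioi 0)) :=
    ((integrable_indicator_iff measurableSet_Ioc).2 (hint1.const_mul _)).mono_measure
      Measure.restrict_le_self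
  have hg2 : Integrable ((Set.Ioi u).indicator
      fun z : ℝ => 2 * |x| * z) (ν.restrict (Set.Ioi 0)) :=
    ((integrable_indicator_iff measurableSet_Ioi).2 (hint2.const_mul _)).mono_measure
      Measure.restrict_le_self
  calc _ ≤ ∫ z in Set.Ioi (0:ℝ), ((Set.Ioc 0 u).indicator
          (fun z : ℝ => 2 * (x ^ 2 / Real.log δ * m) * z ^ 2) z +
        (Set.Ioi u).indicator (fun z : ℝ => 2 * |x| * z) z) ∂ν := by
        refine integral_mono_of_nonneg ?_ (hg1.add hg2) ?_
        · exact (ae_restrict_iff' measurableSet_Ioi).2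
            (Filter.Eventually.of_forall fun z hz => hnonneg z hz)
        · refine (ae_restrict_iff' measurableSet_Ioi).2
            (Filter.Eventually.of_forall fun z hz => ?_)
          have hz : 0 < z := hz
          rcases le_or_gt z u with hzu | hzu
          · simpa [Set.indicator, hz, hzu, not_lt.2 hzu] using hquad z hz
          · simpa [Set.indicator, hz, hzu, not_le.2 hzu] using hlin z hz
    _ = _ := by
        rw [integral_add hg1 hg2, setIntegral_indicator measurableSet_Ioc,
          setIntegral_indicator measurableSet_Ioi,
          Set.inter_eq_right.2 Set.Ioc_subset_Ioi_self,
          Set.inter_eq_right.2 (Set.Ioi_subset_Ioi hu.le), integral_const_mul, integral_const_mul]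
        simp only [Pi.one_apply]
        ring
end

section
/- Let ε ∈ (0,1), δ ∈ (1,∞) and let φ : ℝ → ℝ be a twice continuously differentiable function such that 0 ≤ φ''(x) ≤ (2/(|x| log δ))·1_{[ε/δ, ε]}(|x|) for all x ≠ 0. Then for every y ∈ ℝ \ {0}, every x' ∈ ℝ with x'·y ≥ 0 and every z ≥ 0, one has | φ'(y + x' z) − φ'(y) | ≤ (2 |x'| z / log δ) · min(1/|y|, δ/ε) · 1_{(0,ε]}(|y|). -/
/-!
The estimate is the mean value inequality for `φ'` on the segment from `y` to `y + x' z`.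
Since `x' y ≥ 0` and `z ≥ 0`, every point `w` of this segment satisfies `|y| ≤ |w|`
(`abs_le_abs_of_mem_segment`). So wherever `φ''(w)` can be nonzero, `ε / δ ≤ |w| ≤ ε` gives
`|y| ≤ ε` and `1 / |w| ≤ min (1 / |y|) (δ / ε)`, hence a bound on `φ''` that is uniform along
the segment.
-/


open MeasureTheory

/-- Moving from `y` in a direction `v` of the same sign does not decrease the absolute value. -/
theorem abs_le_abs_of_mem_segment {y v w : ℝ} (h : 0 ≤ v * y)
    (hw : w ∈ segment ℝ y (y + v)) : |y| ≤ |w| := by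
  rw [segment_eq_image'] at hw
  obtain ⟨θ, ⟨hθ, -⟩, rfl⟩ := hw
  apply sq_le_sq.mp
  simp only [smul_eq_mul, add_sub_cancel_left]
  nlinarith [mul_nonneg hθ h, sq_nonneg (θ * v)]

/-- Estimate on the increment of `φ'` used in the proof of Lemma 4.3 of the paper:
when `x'·y ≥ 0` and `z ≥ 0`,
`|φ'(y + x'z) − φ'(y)| ≤ (2|x'|z/log δ) · min(1/|y|, δ/ε) · 1_{(0,ε]}(|y|)`. -/
theorem stmt_11 (δ ε : ℝ) (hδ : δ ∈ Set.Ioi (1:ℝ)) (hε : ε ∈ Set.Ioo (0:ℝ) 1)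
    (φ : ℝ → ℝ) (hφC2 : ContDiff ℝ 2 φ)
    (hφ'' : ∀ x : ℝ, x ≠ 0 → 0 ≤ deriv (deriv φ) x ∧
      deriv (deriv φ) x ≤
        (2 / (|x| * Real.log δ)) * Set.indicator (Set.Icc (ε / δ) ε) 1 |x|) :
    ∀ y : ℝ, y ≠ 0 → ∀ x' : ℝ, 0 ≤ x' * y → ∀ z : ℝ, 0 ≤ z →
      |deriv φ (y + x' * z) - deriv φ y| ≤
        (2 * |x'| * z / Real.log δ) * min (1 / |y|) (δ / ε) *
          Set.indicator (Set.Ioc (0:ℝ) ε) 1 |y| := by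
  intro y hy x' hxy z hz
  have hδ0 : 0 < δ := lt_trans one_pos hδ
  have hε0 : 0 < ε := hε.1
  have hL : 0 < Real.log δ := Real.log_pos hδ
  have hy0 : 0 < |y| := abs_pos.mpr hy
  set I : ℝ := Set.indicator (Set.Ioc (0:ℝ) ε) 1 |y| with hI
  have hI0 : 0 ≤ I := Set.indicator_nonneg (fun _ _ => zero_le_one) _
  have hm0 : 0 ≤ min (1 / |y|) (δ / ε) := le_min (by positivity) (by positivity)
  have hdiff : Differentiable ℝ (deriv φ) :=
    (hφC2.deriv' (n := 1)).differentiable one_ne_zero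
  have hv : 0 ≤ x' * z * y := by nlinarith [mul_nonneg hxy hz]
  have key : ∀ w ∈ segment ℝ y (y + x' * z),
      ‖deriv (deriv φ) w‖ ≤ 2 / Real.log δ * min (1 / |y|) (δ / ε) * I := by
    intro w hw
    have hyw := abs_le_abs_of_mem_segment hv hw
    have hw0 : 0 < |w| := hy0.trans_le hyw
    obtain ⟨h0, h1⟩ := hφ'' w (abs_pos.mp hw0)
    rw [Real.norm_of_nonneg h0]
    refine h1.trans ?_
    by_cases hmem : |w| ∈ Set.Icc (ε / δ) ε
    · have hI1 : I = 1 := by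
        have hyI : |y| ∈ Set.Ioc 0 ε := ⟨hy0, hyw.trans hmem.2⟩
        rw [hI, Set.indicator_of_mem hyI, Pi.one_apply]
      rw [Set.indicator_of_mem hmem, hI1, Pi.one_apply, mul_one, mul_one]
      have hmin : 1 / |w| ≤ min (1 / |y|) (δ / ε) := by
        refine le_min (one_div_le_one_div_of_le hy0 hyw) ?_
        rw [← one_div_div ε δ]
        exact one_div_le_one_div_of_le (by positivity) hmem.1
      calc 2 / (|w| * Real.log δ) = 2 / Real.log δ * (1 / |w|) := by field_simp
        _ ≤ _ := by gcongr
    · rw [Set.indicator_of_notMem hmem, mul_zero]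
      positivity
  have hmv := (convex_segment y (y + x' * z)).norm_image_sub_le_of_norm_deriv_le
    (fun w _ => hdiff w) key (left_mem_segment ℝ _ _) (right_mem_segment ℝ _ _)
  rw [Real.norm_eq_abs, add_sub_cancel_left, norm_mul, Real.norm_eq_abs,
    Real.norm_of_nonneg hz] at hmv
  refine hmv.trans_eq ?_
  ring
end
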